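/- arXiv:1701.01201 — 5 statements merged into one kernel-verified Lean document; each statement's English description precedes it below -/
import Mathlib

section
/- For every positive integer k and all points x, y ∈ ℝ² with 0 < |x−y| ≤ 2, the covariance G(x,y) := k·log 2 · ∑_{j=0}^∞ A(x,y; 2^{−kj}) (a sum in which all terms with 2^{−kj} < |x−y|/2 vanish, so only finitely many terms are nonzero) satisfies |G(x,y) + log|x−y|| ≤ 6k. -/
/-!
Write `d = dist x y`, `q = 2 ^ k`, `L = log q = k log 2`. Three facts about `A(x,y;R)` suffice:
`A ≤ 1`; `A = 0` when `2R ≤ d`; and `A ≥ (1 - d/(2R))² ≥ 1 - d/R` when `d ≤ 2R`, because the ball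
of radius `R - d/2` about the midpoint lies in both balls.

Let `N` be the least natural number with `2 ≤ d q^N`. The sum has at most its first `N` terms, so it
is at most `N`, and at least `N - ∑_{j<N} d q^j`. By minimality of `N` and `q ≥ 2`, the geometric
sum is at most `2 d q^(N-1) ≤ 4`. Taking logarithms in `d q^(N-1) < 2 ≤ d q^N` gives
`log 2 ≤ log d + N L ≤ log 2 + L`, hence `log 2 - 4 L ≤ G + log d ≤ log 2 + L`,
which is stronger than the claim.
-/

open MeasureTheory

/-- `A(x,y;R)`: normalized area of intersection of two balls of radius `R`. -/
noncomputable def ballA (x y : EuclideanSpace ℝ (Fin 2)) (R : ℝ) : ℝ :=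
  (volume (Metric.ball x R ∩ Metric.ball y R)).toReal / (volume (Metric.ball x R)).toReal

/-- `G(x,y) = k log 2 ∑_{j≥0} A(x,y;2^{-kj})`. -/
noncomputable def covG (k : ℕ) (x y : EuclideanSpace ℝ (Fin 2)) : ℝ :=
  (k : ℝ) * Real.log 2 * ∑' j : ℕ, ballA x y ((2:ℝ) ^ (-(k * j : ℤ)))

lemma ballA_le_one (x y : EuclideanSpace ℝ (Fin 2)) (R : ℝ) : ballA x y R ≤ 1 := by
  unfold ballA
  refine div_le_one_of_le₀ ?_ ENNReal.toReal_nonneg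
  exact ENNReal.toReal_mono measure_ball_lt_top.ne (measure_mono Set.inter_subset_left)

lemma ballA_eq_zero (x y : EuclideanSpace ℝ (Fin 2)) (R : ℝ) (h : 2 * R ≤ dist x y) :
    ballA x y R = 0 := by
  unfold ballA
  have : Disjoint (Metric.ball x R) (Metric.ball y R) :=
    Metric.ball_disjoint_ball (by linarith)
  simp [this.inter_eq]

/-- The ball of radius `R - d/2` about the midpoint of `x` and `y` is contained in both balls. -/
lemma le_ballA (x y : EuclideanSpace ℝ (Fin 2)) (R : ℝ) (hR : 0 < R) (h : dist x y ≤ 2 * R) :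
    1 - dist x y / R ≤ ballA x y R := by
  have hsub : Metric.ball (midpoint ℝ x y) (R - dist x y / 2) ⊆
      Metric.ball x R ∩ Metric.ball y R := by
    refine Set.subset_inter (Metric.ball_subset_ball' ?_) (Metric.ball_subset_ball' ?_)
    · rw [dist_midpoint_left]; norm_num; linarith
    · rw [dist_midpoint_right]; norm_num; linarith
  have hfin : volume (Metric.ball x R ∩ Metric.ball y R) ≠ ⊤ :=
    ((measure_mono Set.inter_subset_left).trans_lt measure_ball_lt_top).ne
  have hle := ENNReal.toReal_mono hfin (measure_mono (μ := volume) hsub)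
  have hv : 0 < (volume (Metric.ball (0 : EuclideanSpace ℝ (Fin 2)) 1)).toReal :=
    ENNReal.toReal_pos (Metric.measure_ball_pos _ _ one_pos).ne' measure_ball_lt_top.ne
  have hr : 0 ≤ R - dist x y / 2 := by linarith
  unfold ballA
  rw [Measure.addHaar_ball _ _ hr, finrank_euclideanSpace_fin, ENNReal.toReal_mul,
    ENNReal.toReal_ofReal (by positivity)] at hle
  rw [Measure.addHaar_ball _ x hR.le, finrank_euclideanSpace_fin, ENNReal.toReal_mul,
    ENNReal.toReal_ofReal (by positivity), le_div_iff₀ (by positivity)]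
  refine le_trans ?_ hle
  rw [← mul_assoc]
  refine mul_le_mul_of_nonneg_right ?_ hv.le
  have : (1 - dist x y / R) * R ^ 2 = R ^ 2 - dist x y * R := by field_simp
  rw [this]
  nlinarith [sq_nonneg (dist x y)]

lemma geom_sum_le_two_mul (q : ℝ) (hq : 2 ≤ q) (n : ℕ) :
    ∑ j ∈ Finset.range (n + 1), q ^ j ≤ 2 * q ^ n := by
  induction n with
  | zero => norm_num
  | succ n ih =>
    rw [Finset.sum_range_succ, pow_succ]
    have : 0 < q ^ n := by positivity
    nlinarith

theorem stmt0 (k : ℕ) (hk : 0 < k) (x y : EuclideanSpace ℝ (Fin 2))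
    (h1 : 0 < dist x y) (h2 : dist x y ≤ 2) :
    |covG k x y + Real.log (dist x y)| ≤ 6 * k := by
  have hlog2 : 0 < Real.log 2 := Real.log_pos (by norm_num)
  have hlog2' : Real.log 2 < 0.7 := by linarith [Real.log_two_lt_d9]
  have hk1 : (1 : ℝ) ≤ k := by exact_mod_cast hk
  set q : ℝ := 2 ^ k with hq
  have hq2 : 2 ≤ q := by
    calc (2 : ℝ) = 2 ^ 1 := by norm_num
      _ ≤ 2 ^ k := pow_le_pow_right₀ (by norm_num) hk
  have hq0 : 0 < q := by linarith
  have hlogq : Real.log q = k * Real.log 2 := by rw [hq, Real.log_pow]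
  have hterm : ∀ j : ℕ, (2 : ℝ) ^ (-(k * j : ℤ)) = (q ^ j)⁻¹ := by
    intro j
    rw [zpow_neg, hq, ← pow_mul]
    norm_cast
  have hex : ∃ n : ℕ, 2 ≤ dist x y * q ^ n := by
    obtain ⟨n, hn⟩ := pow_unbounded_of_one_lt (2 / dist x y) (by linarith : 1 < q)
    refine ⟨n, ?_⟩
    rw [div_lt_iff₀ h1] at hn
    linarith
  obtain ⟨N, hN, hmin⟩ : ∃ N : ℕ, 2 ≤ dist x y * q ^ N ∧ ∀ m < N, dist x y * q ^ m < 2 := by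
    classical
    exact ⟨Nat.find hex, Nat.find_spec hex, fun m hm => not_le.1 (Nat.find_min hex hm)⟩
  set d := dist x y with hd
  have hsum : covG k x y = k * Real.log 2 * ∑ j ∈ Finset.range N, ballA x y (q ^ j)⁻¹ := by
    unfold covG
    simp_rw [hterm]
    rw [tsum_eq_sum]
    intro j hj
    apply ballA_eq_zero
    have hNj : N ≤ j := by simpa using hj
    have hpow : q ^ N ≤ q ^ j := pow_le_pow_right₀ (by linarith) hNj
    rw [← div_eq_mul_inv, div_le_iff₀ (by positivity)]
    exact hN.trans (mul_le_mul_of_nonneg_left hpow h1.le)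
  have hup : ∑ j ∈ Finset.range N, ballA x y (q ^ j)⁻¹ ≤ N := by
    calc _ ≤ ∑ j ∈ Finset.range N, (1 : ℝ) := Finset.sum_le_sum fun j _ => ballA_le_one _ _ _
      _ = N := by simp
  have hlow : (N : ℝ) - d * ∑ j ∈ Finset.range N, q ^ j
      ≤ ∑ j ∈ Finset.range N, ballA x y (q ^ j)⁻¹ := by
    calc _ = ∑ j ∈ Finset.range N, (1 - d * q ^ j) := by
          simp [Finset.sum_sub_distrib, Finset.mul_sum]
      _ ≤ _ := by
          refine Finset.sum_le_sum fun j hj => ?_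
          have hqj : 0 < q ^ j := by positivity
          have := le_ballA x y (q ^ j)⁻¹ (by positivity) (by
            rw [← div_eq_mul_inv, le_div_iff₀ hqj]
            exact (hmin j (by simpa using hj)).le)
          simpa [div_inv_eq_mul] using this
  have hgeom : d * ∑ j ∈ Finset.range N, q ^ j ≤ 4 := by
    rcases N with _ | n
    · simp
    · have h := mul_le_mul_of_nonneg_left (geom_sum_le_two_mul q hq2 n) h1.le
      have := hmin n (Nat.lt_succ_self n)
      linarith
  have hlogs : ∀ m : ℕ, Real.log (d * q ^ m) = Real.log d + m * (k * Real.log 2) := by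
    intro m
    rw [Real.log_mul h1.ne' (by positivity), Real.log_pow, hlogq]
  have hL : 0 < k * Real.log 2 := by positivity
  have hlogN : Real.log 2 ≤ Real.log d + N * (k * Real.log 2) := by
    rw [← hlogs]; exact Real.log_le_log (by norm_num) hN
  have hlogN' : Real.log d + N * (k * Real.log 2) ≤ Real.log 2 + k * Real.log 2 := by
    rcases N with _ | n
    · have := Real.log_le_log h1 h2
      simp only [Nat.cast_zero, zero_mul]
      linarith
    · have := Real.log_le_log (by positivity) (hmin n (Nat.lt_succ_self n)).le
      rw [hlogs] at this
      push_cast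
      linarith
  have hGup := mul_le_mul_of_nonneg_left hup hL.le
  have hGlow := mul_le_mul_of_nonneg_left (hlow.trans' (sub_le_sub_left hgeom _)) hL.le
  rw [← hsum] at hGup hGlow
  have hLk : k * Real.log 2 ≤ k * 0.7 := mul_le_mul_of_nonneg_left hlog2'.le (by positivity)
  rw [abs_le]
  constructor <;> linarith
end

section
/- For every positive integer k, the function g : (0,2] → ℝ defined by g(d) := k·log 2 · ((r₀(d)+1) − (1/π) ∑_{j=0}^{r₀(d)} (2θ_{j,d} + sin(2θ_{j,d}))) is continuous on (0,2]. -/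
/-!
`Real.arcsin` is constantly `π / 2` on `[1, ∞)`, so the summand
`1 - (2θ + sin 2θ) / π` attached to an index `j > r₀(d)` vanishes. The range of summation may
therefore be enlarged to any `N > r₀(d)` without changing the value (`sum_eq_of_lt`). Near a given
point `r₀` is bounded, so a single `N` serves a whole neighbourhood, on which the function is then a
finite sum of continuous functions.
-/

open MeasureTheory

/-- The contribution `1 - (2θ + sin 2θ) / π` of the index `j`, where `θ = arcsin (2 ^ (k j) d / 2)`
and `arcsin` is extended by `π / 2` beyond `1`. -/
noncomputable def summand (k j : ℕ) (d : ℝ) : ℝ :=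
  1 - (1 / Real.pi) * (2 * Real.arcsin ((2:ℝ) ^ (k * j) * d / 2)
    + Real.sin (2 * Real.arcsin ((2:ℝ) ^ (k * j) * d / 2)))

theorem continuous_summand (k j : ℕ) : Continuous (summand k j) := by
  unfold summand
  have h : Continuous fun d : ℝ => Real.arcsin ((2:ℝ) ^ (k * j) * d / 2) :=
    Real.continuous_arcsin.comp (by fun_prop)
  fun_prop

theorem summand_eq_zero {k j : ℕ} {d : ℝ} (h : 1 ≤ (2:ℝ) ^ (k * j) * d / 2) :
    summand k j d = 0 := by
  have hpi := Real.pi_ne_zero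
  rw [summand, Real.arcsin_of_one_le h, mul_div_cancel₀ _ (two_ne_zero), Real.sin_pi]
  field_simp
  simp

/-- Extending the summation from `j ≤ r` to `j < N` only adds vanishing terms. -/
theorem sum_eq_of_lt {k r N : ℕ} {d : ℝ} (hd : (2:ℝ) ^ (-(k * (r + 1) : ℤ)) < d / 2)
    (hN : r < N) :
    ((r : ℝ) + 1) - (1 / Real.pi) * ∑ j ∈ Finset.range (r + 1),
        (2 * Real.arcsin ((2:ℝ) ^ (k * j) * d / 2)
          + Real.sin (2 * Real.arcsin ((2:ℝ) ^ (k * j) * d / 2)))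
      = ∑ j ∈ Finset.range N, summand k j d := by
  have h1 : ∑ j ∈ Finset.range (r + 1), summand k j d = ∑ j ∈ Finset.range N, summand k j d := by
    apply Finset.sum_subset
    · intro j
      simp only [Finset.mem_range]
      omega
    · intro j _ hj
      have hj : r + 1 ≤ j := by simpa using hj
      apply summand_eq_zero
      have e : (2:ℝ) ^ (-(k * (r + 1) : ℤ)) = ((2:ℝ) ^ (k * (r + 1)))⁻¹ := by
        rw [zpow_neg]
        exact_mod_cast rfl
      rw [e, inv_lt_iff_one_lt_mul₀ (by positivity)] at hd
      have hd0 : 0 < d / 2 := by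
        by_contra! hneg
        have hp : (0:ℝ) < (2:ℝ) ^ (k * (r + 1)) := by positivity
        nlinarith
      have hpow : (2:ℝ) ^ (k * (r + 1)) ≤ (2:ℝ) ^ (k * j) :=
        pow_le_pow_right₀ (by norm_num) (Nat.mul_le_mul_left k hj)
      nlinarith
  rw [← h1]
  simp only [summand, Finset.sum_sub_distrib, Finset.mul_sum]
  simp

theorem stmt1 (k : ℕ) (hk : 0 < k) (r0 : ℝ → ℕ)
    (hr0 : ∀ d ∈ Set.Ioc (0:ℝ) 2,
      (2:ℝ) ^ (-(k * (r0 d + 1) : ℤ)) < d / 2 ∧ d / 2 ≤ (2:ℝ) ^ (-(k * r0 d : ℤ))) :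
    ContinuousOn (fun d : ℝ =>
      (k : ℝ) * Real.log 2 * (((r0 d : ℝ) + 1) - (1 / Real.pi) *
        ∑ j ∈ Finset.range (r0 d + 1),
          (2 * Real.arcsin ((2:ℝ) ^ (k * j) * d / 2)
            + Real.sin (2 * Real.arcsin ((2:ℝ) ^ (k * j) * d / 2)))))
      (Set.Ioc (0:ℝ) 2) := by
  intro a ha
  have ha0 : 0 < a := ha.1
  obtain ⟨N, hN⟩ := exists_pow_lt_of_lt_one (show (0:ℝ) < a / 4 by positivity)
    (show (1 / 2 : ℝ) < 1 by norm_num)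
  -- On `d > a / 2` the choice of `N` forces `r0 d < N`.
  have key : ∀ d ∈ Set.Ioc (0:ℝ) 2, a / 2 < d → r0 d < N := by
    intro d hd had
    by_contra! hle
    have h2 := (hr0 d hd).2
    have e : (2:ℝ) ^ (-(k * r0 d : ℤ)) = (1 / 2 : ℝ) ^ (k * r0 d) := by
      rw [zpow_neg, one_div, inv_pow]
      exact_mod_cast rfl
    have h3 : (1 / 2 : ℝ) ^ (k * r0 d) ≤ (1 / 2 : ℝ) ^ N :=
      pow_le_pow_of_le_one (by norm_num) (by norm_num)
        (hle.trans (Nat.le_mul_of_pos_left _ hk))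
    linarith
  have hcont : Continuous fun d : ℝ =>
      (k : ℝ) * Real.log 2 * ∑ j ∈ Finset.range N, summand k j d :=
    continuous_const.mul (continuous_finsetSum _ fun j _ => continuous_summand k j)
  refine hcont.continuousWithinAt.congr_of_eventuallyEq ?_ ?_
  · filter_upwards [self_mem_nhdsWithin,
      mem_nhdsWithin_of_mem_nhds (Ioi_mem_nhds (show a / 2 < a by linarith))] with d hd had
    rw [sum_eq_of_lt (hr0 d hd).1 (key d hd had)]
  · rw [sum_eq_of_lt (hr0 a ha).1 (key a ha (by linarith))]
end

section
/- There exists a positive integer k₀ such that for every integer k ≥ k₀, every integer r ≥ 1, and all x, y ∈ ℝ² with |x−y| ≤ 2, one has 2·k·log 2 · ∑_{j=0}^{r−1} (1 − A(x,y; 2^{−kj})) ≤ 2^{kr}·|x−y|. (The left-hand side equals E(φ_r(x) − φ_r(y))² for the coarse field φ_r with covariance G_r^{(1)}.) -/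
/-!
Write `d = |x - y|`. The triangle inequality puts the ball of radius `R - d/2` about the midpoint of
`x` and `y` inside both `B(x,R)` and `B(y,R)`, so `A(x,y;R) ≥ (1 - d/(2R))² ≥ 1 - d/R` when
`d ≤ 2R`; otherwise `1 - A ≤ 1 ≤ d/R` trivially. Hence `1 - A(x,y;R) ≤ d/R` always
(`one_sub_ballA_le`). With `R = 2^{-kj}` the sum over `j` is at most `d ∑_{j<r} 2^{kj}`, a geometric
sum with `(2^k - 1) ∑_{j<r} 2^{kj} = 2^{kr} - 1`. It remains that `2k log 2 ≤ 2^k - 1`, which holds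
for `k ≥ 3` since `log 2 < 1` and `2k + 1 ≤ 2^k`.
-/

open MeasureTheory

lemma one_sub_ballA_le (x y : EuclideanSpace ℝ (Fin 2)) {R : ℝ} (hR : 0 < R) :
    1 - ballA x y R ≤ dist x y / R := by
  have hA : 0 ≤ ballA x y R := by unfold ballA; positivity
  rcases le_total (2 * R) (dist x y) with h | h
  · have : 1 ≤ dist x y / R := by rw [le_div_iff₀ hR]; linarith
    linarith
  have hsub : Metric.ball (midpoint ℝ x y) (R - dist x y / 2) ⊆
      Metric.ball x R ∩ Metric.ball y R := by
    apply Set.subset_inter <;> apply Metric.ball_subset_ball'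
    · rw [dist_midpoint_left]; norm_num; linarith
    · rw [dist_midpoint_right]; norm_num; linarith
  have hvol : ∀ (z : EuclideanSpace ℝ (Fin 2)) (s : ℝ), 0 ≤ s →
      (volume (Metric.ball z s)).toReal =
        s ^ 2 * (volume (Metric.ball (0 : EuclideanSpace ℝ (Fin 2)) 1)).toReal := by
    intro z s hs
    rw [Measure.addHaar_ball volume z hs, ENNReal.toReal_mul, finrank_euclideanSpace_fin,
      ENNReal.toReal_ofReal (by positivity)]
  have hV : 0 < (volume (Metric.ball (0 : EuclideanSpace ℝ (Fin 2)) 1)).toReal :=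
    ENNReal.toReal_pos (Metric.measure_ball_pos _ _ one_pos).ne' measure_ball_lt_top.ne
  have hle : (volume (Metric.ball (midpoint ℝ x y) (R - dist x y / 2))).toReal ≤
      (volume (Metric.ball x R ∩ Metric.ball y R)).toReal :=
    ENNReal.toReal_mono
      ((measure_mono Set.inter_subset_left).trans_lt measure_ball_lt_top).ne (measure_mono hsub)
  rw [hvol _ _ (by linarith)] at hle
  have : 1 - dist x y / R ≤ ballA x y R := by
    unfold ballA
    rw [hvol x R hR.le, le_div_iff₀ (by positivity)]
    refine le_trans ?_ hle
    rw [← mul_assoc]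
    refine mul_le_mul_of_nonneg_right ?_ hV.le
    have : (1 - dist x y / R) * R ^ 2 = R ^ 2 - dist x y * R := by field_simp
    rw [this]
    nlinarith [sq_nonneg (dist x y)]
  linarith

lemma two_mul_add_one_le_two_pow (k : ℕ) (hk : 3 ≤ k) : 2 * k + 1 ≤ 2 ^ k := by
  induction k, hk using Nat.le_induction with
  | base => norm_num
  | succ n hn ih => rw [pow_succ]; omega

theorem stmt2 : ∃ k₀ : ℕ, 0 < k₀ ∧ ∀ k : ℕ, k₀ ≤ k → ∀ r : ℕ, 1 ≤ r →
    ∀ x y : EuclideanSpace ℝ (Fin 2), dist x y ≤ 2 →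
      2 * (k : ℝ) * Real.log 2 *
          ∑ j ∈ Finset.range r, (1 - ballA x y ((2:ℝ) ^ (-(k * j : ℤ))))
        ≤ (2:ℝ) ^ (k * r) * dist x y := by
  refine ⟨3, by norm_num, fun k hk r _ x y _ => ?_⟩
  have hsum : ∑ j ∈ Finset.range r, (1 - ballA x y ((2:ℝ) ^ (-(k * j : ℤ)))) ≤
      (∑ j ∈ Finset.range r, ((2:ℝ) ^ k) ^ j) * dist x y := by
    rw [Finset.sum_mul]
    refine Finset.sum_le_sum fun j _ => (one_sub_ballA_le x y (by positivity)).trans_eq ?_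
    rw [zpow_neg, div_inv_eq_mul, mul_comm, ← pow_mul]
    norm_cast
  have hlog : Real.log 2 ≤ 1 := by linarith [Real.log_two_lt_d9]
  have hlog0 : 0 ≤ Real.log 2 := Real.log_nonneg (by norm_num)
  have hk' : 2 * (k : ℝ) + 1 ≤ 2 ^ k := by exact_mod_cast two_mul_add_one_le_two_pow k hk
  have hcoef : 2 * (k : ℝ) * Real.log 2 ≤ 2 ^ k - 1 := by
    have := mul_le_mul_of_nonneg_left hlog (by positivity : 0 ≤ 2 * (k : ℝ))
    linarith
  calc _ ≤ 2 * (k : ℝ) * Real.log 2 * ((∑ j ∈ Finset.range r, ((2:ℝ) ^ k) ^ j) * dist x y) :=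
        mul_le_mul_of_nonneg_left hsum (by positivity)
    _ ≤ (2 ^ k - 1) * ((∑ j ∈ Finset.range r, ((2:ℝ) ^ k) ^ j) * dist x y) :=
        mul_le_mul_of_nonneg_right hcoef (by positivity)
    _ = (((2:ℝ) ^ k) ^ r - 1) * dist x y := by
        rw [← geom_sum_mul ((2:ℝ) ^ k) r]; ring
    _ ≤ (2:ℝ) ^ (k * r) * dist x y := by
        rw [pow_mul]
        exact mul_le_mul_of_nonneg_right (by linarith) dist_nonneg
end

section
/- Let B be a finite nonempty set and let (η_z)_{z∈B} be a (jointly) Gaussian family of real random variables, and set σ² := max_{z∈B} Var(η_z), assumed positive. Then for every λ > 0, E[exp(λ·(max_{z∈B} η_z − E[max_{z∈B} η_z]))] ≤ exp(λ²σ²/2), and for every a > 0, P(|max_{z∈B} η_z − E[max_{z∈B} η_z]| ≥ a) ≤ 2·exp(−a²/(2σ²)). -/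
/-!
The sharp sub-Gaussian bound `E exp (f - E f) ≤ exp (s / 2)` is obtained by cutting a centered
Gaussian vector `X` into `N` independent steps, each distributed as `X / √N` (stability,
`map_prod_eq_map_smul`).

Let `f` be Lipschitz. In one step of size `h`, started at any `x`, a third order expansion of `exp`
around the mean gives
`E exp f(x + h X) ≤ exp (E f(x + h X) + v / 2 + O(h³))`, where `v` bounds
`E (f(x + h X) - f x)²` uniformly in `x` (`one_step`). The averaged function `x ↦ E f(x + h X)` has
the same Lipschitz constant and, by Jensen and Fubini, the same bound `v` (`lipschitz_avg`,
`avg_increment`), so the estimate iterates (`many_steps`). If `v = h² s + O(h³)`, then taking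
`h = 1 / √N` and `N → ∞` leaves exactly `s / 2` (`exp_integral_bound`).

The maximum itself does not satisfy the bound on `v`, so it is replaced by the log-sum-exp function
`(1 / β) log ∑ exp (β x_z)`. Its increments are at most `exp (β ‖y‖) ∑ p_z |y_z|` for the softmax
weights `p`, whence `v ≤ h² max Var + O(h³)` by convexity of the square. As log-sum-exp is within
`log |B| / β` of the maximum, letting `β → ∞` gives the moment generating function bound for every
real `λ` (`mgf_sup`), and the two-sided tail bound is Chernoff's.
-/

open MeasureTheory ProbabilityTheory
open scoped NNReal

/-! ### Gaussian random walk estimates -/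

section Abstract

variable {E : Type*} [NormedAddCommGroup E] [NormedSpace ℝ E] [MeasurableSpace E] [BorelSpace E]
  [SecondCountableTopology E] [CompleteSpace E]

/-- A consequence of Fernique's theorem, by completing the square. -/
lemma integrable_exp_norm (μ : Measure E) [IsGaussian μ] (c : ℝ) :
    Integrable (fun y => Real.exp (c * ‖y‖)) μ := by
  obtain ⟨C, hC, hint⟩ := IsGaussian.exists_integrable_exp_sq μ
  refine (hint.const_mul (Real.exp (c ^ 2 / (4 * C)))).mono' (by fun_prop) (.of_forall fun y => ?_)
  rw [Real.norm_eq_abs, Real.abs_exp, ← Real.exp_add]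
  apply Real.exp_le_exp.2
  have h : 0 ≤ C * (‖y‖ - c / (2 * C)) ^ 2 := by positivity
  have h2 : C * (‖y‖ - c / (2 * C)) ^ 2 = C * ‖y‖ ^ 2 - c * ‖y‖ + c ^ 2 / (4 * C) := by
    field_simp; ring
  linarith

lemma integrable_of_le_exp_norm (μ : Measure E) [IsGaussian μ] {g : E → ℝ} (hg : Continuous g)
    (A c : ℝ) (h : ∀ y, |g y| ≤ A * Real.exp (c * ‖y‖)) : Integrable g μ :=
  ((integrable_exp_norm μ c).const_mul A).mono' hg.aestronglyMeasurable (.of_forall h)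

/-- Stability of a centered Gaussian law: `a X + b Y` has the law of `c X` when `X`, `Y` are
independent copies and `a² + b² = c²`. -/
lemma map_prod_eq_map_smul (μ : Measure E) [IsGaussian μ] (hμ : ∫ x, x ∂μ = 0) {a b c : ℝ}
    (h : a ^ 2 + b ^ 2 = c ^ 2) :
    (μ.prod μ).map (fun p : E × E => a • p.1 + b • p.2) = μ.map (fun x => c • x) := by
  have e1 : (fun p : E × E => a • p.1 + b • p.2) =
    ⇑(a • ContinuousLinearMap.fst ℝ E E + b • ContinuousLinearMap.snd ℝ E E) := by ext p; simp
  have e2 : (fun x : E => c • x) = ⇑(c • ContinuousLinearMap.id ℝ E) := by ext p; simp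
  rw [e1, e2]
  refine Measure.ext_of_charFunDual ?_
  ext L
  have key (d : ℝ) : charFunDual μ (d • L) = Complex.exp (- ((d ^ 2 * Var[L; μ] : ℝ) : ℂ) / 2) := by
    rw [IsGaussian.charFunDual_eq_of_integral_eq_zero (by simpa using hμ)]
    congr 4
    exact variance_const_mul d L μ
  rw [charFunDual_map, charFunDual_prod, charFunDual_map]
  have h1 : (L.comp (a • ContinuousLinearMap.fst ℝ E E + b • ContinuousLinearMap.snd ℝ E E)).comp
      (.inl ℝ E E) = a • L := by ext; simp
  have h2 : (L.comp (a • ContinuousLinearMap.fst ℝ E E + b • ContinuousLinearMap.snd ℝ E E)).comp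
      (.inr ℝ E E) = b • L := by ext; simp
  have h3 : L.comp (c • ContinuousLinearMap.id ℝ E) = c • L := by ext; simp
  rw [h1, h2, h3, key, key, key, ← Complex.exp_add, ← h]
  congr 1
  push_cast
  ring

lemma exp_le_cubic (u : ℝ) :
    Real.exp u ≤ 1 + u + u ^ 2 / 2 + |u| ^ 3 * Real.exp |u| := by
  have h := Complex.norm_exp_sub_sum_le_norm_mul_exp (u : ℂ) 3
  rw [Complex.norm_real, Real.norm_eq_abs] at h
  have := (Complex.re_le_norm _).trans h
  rw [← Complex.ofReal_exp] at this
  norm_cast at this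
  simp only [Finset.sum_range_succ, Finset.sum_range_zero] at this
  norm_num [Nat.factorial] at this
  linarith

lemma LipschitzWith.abs_add_sub_le {E : Type*} [NormedAddCommGroup E] {L : ℝ≥0} {f : E → ℝ}
    (hf : LipschitzWith L f) (x y : E) :
    |f (x + y) - f x| ≤ L * ‖y‖ := by
  have := hf.norm_sub_le (x + y) x
  simpa using this

variable {μ : Measure E} [IsGaussian μ] {L : ℝ≥0} {f : E → ℝ}

lemma integrable_lip (hf : LipschitzWith L f) (x : E) (h : ℝ) :
    Integrable (fun y => f (x + h • y)) μ := by
  have hc := hf.continuous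
  have : Integrable (fun y => f (x + h • y) - f x) μ := by
    refine (IsGaussian.integrable_id (μ := μ)).norm.const_mul (L * |h|) |>.mono'
      (by fun_prop) (.of_forall fun y => ?_)
    refine (hf.abs_add_sub_le x (h • y)).trans (le_of_eq ?_)
    rw [norm_smul, Real.norm_eq_abs]; simp; ring
  refine (this.add (integrable_const (f x))).congr (.of_forall fun y => ?_)
  simp

lemma integrable_lip_sq (hf : LipschitzWith L f) (x : E) (h c : ℝ) :
    Integrable (fun y => (f (x + h • y) - c) ^ 2) μ := by
  have hc := hf.continuous
  have h2 : MemLp (fun y => f (x + h • y) - f x) 2 μ := by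
    refine (IsGaussian.memLp_two_id (μ := μ)).norm.const_mul (L * |h|) |>.mono
      (by fun_prop) (.of_forall fun y => ?_)
    refine (hf.abs_add_sub_le x (h • y)).trans ((le_of_eq ?_).trans (le_abs_self _))
    rw [norm_smul, Real.norm_eq_abs]; simp; ring
  have h3 := (h2.add (memLp_const (f x - c))).integrable_sq
  simpa using h3

lemma integrable_lip_exp (hf : LipschitzWith L f) (x : E) (h : ℝ) :
    Integrable (fun y => Real.exp (f (x + h • y))) μ := by
  have hc := hf.continuous
  refine integrable_of_le_exp_norm μ (by fun_prop) (Real.exp (f x)) (L * |h|) fun y => ?_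
  rw [Real.abs_exp, ← Real.exp_add]
  apply Real.exp_le_exp.2
  have := (le_abs_self _).trans (hf.abs_add_sub_le x (h • y))
  rw [norm_smul, Real.norm_eq_abs] at this
  linarith

/-- The bias-variance identity. It gives both that the variance is at most the second moment about
any point `c`, and (with `c = 0`) Jensen's inequality for the square. -/
lemma integral_sub_sq {Ω : Type*} [MeasurableSpace Ω] {μ : Measure Ω} [IsProbabilityMeasure μ]
    (g : Ω → ℝ) (c : ℝ) (hg : Integrable g μ)
    (hg2 : Integrable (fun y => (g y - c) ^ 2) μ) :
    ∫ y, (g y - ∫ z, g z ∂μ) ^ 2 ∂μ = ∫ y, (g y - c) ^ 2 ∂μ - ((∫ z, g z ∂μ) - c) ^ 2 := by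
  set m := ∫ z, g z ∂μ with hm
  have e : (fun y => (g y - m) ^ 2) =
      fun y => (g y - c) ^ 2 - 2 * (m - c) * g y + (m ^ 2 - c ^ 2) := by ext y; ring
  rw [e, integral_add (by exact hg2.sub (hg.const_mul _)) (integrable_const _),
    integral_sub hg2 (hg.const_mul _), integral_const_mul, ← hm]
  simp
  ring

/-- A single step of size `h`: up to an error of order `h ^ 3`, uniform in the starting point `x`,
`f (x + h X)` is sub-Gaussian with variance proxy its mean squared increment. -/
lemma one_step (hf : LipschitzWith L f) {h v : ℝ} (h0 : 0 ≤ h) (h1 : h ≤ 1)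
    (x : E) (hv : ∫ y, (f (x + h • y) - f x) ^ 2 ∂μ ≤ v) :
    ∫ y, Real.exp (f (x + h • y)) ∂μ ≤ Real.exp (∫ y, f (x + h • y) ∂μ + (v / 2 +
      h ^ 3 * ∫ y, 6 * Real.exp (2 * (L * (‖y‖ + ∫ z, ‖z‖ ∂μ))) ∂μ)) := by
  set M := ∫ z, ‖z‖ ∂μ with hM
  set m := ∫ y, f (x + h • y) ∂μ with hm
  have hM0 : 0 ≤ M := integral_nonneg fun _ => norm_nonneg _
  have hnorm : Integrable (fun y : E => ‖y‖) μ := (IsGaussian.integrable_id (μ := μ)).norm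
  have hint := integrable_lip (μ := μ) hf x h
  have hdiff (y : E) : |f (x + h • y) - f x| ≤ h * (L * ‖y‖) := by
    refine (hf.abs_add_sub_le x (h • y)).trans (le_of_eq ?_)
    rw [norm_smul, Real.norm_eq_abs, abs_of_nonneg h0]; ring
  have hmean : |m - f x| ≤ h * (L * M) := by
    have e : m - f x = ∫ y, (f (x + h • y) - f x) ∂μ := by
      rw [integral_sub hint (integrable_const _)]; simp [hm]
    rw [e, hM, ← integral_const_mul, ← integral_const_mul]
    refine (abs_integral_le_integral_abs).trans (integral_mono ?_ ?_ hdiff)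
    · exact (hint.sub (integrable_const _)).abs
    · exact (hnorm.const_mul _).const_mul _
  have hu (y : E) : |f (x + h • y) - m| ≤ h * (L * (‖y‖ + M)) := by
    have := abs_sub_le (f (x + h • y)) (f x) m
    rw [abs_sub_comm (f x)] at this
    linarith [hdiff y]
  have hK : Integrable (fun y : E => 6 * Real.exp (2 * (L * (‖y‖ + M)))) μ := by
    refine ((integrable_exp_norm μ (2 * L)).const_mul (6 * Real.exp (2 * (L * M)))).congr
      (.of_forall fun y => ?_)
    simp only []
    rw [mul_assoc, ← Real.exp_add]; ring_nf
  have hpt (y : E) : Real.exp (f (x + h • y) - m) ≤ 1 + (f (x + h • y) - m) +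
      (f (x + h • y) - m) ^ 2 / 2 + h ^ 3 * (6 * Real.exp (2 * (L * (‖y‖ + M)))) := by
    refine (exp_le_cubic _).trans ?_
    set w := (L : ℝ) * (‖y‖ + M) with hw
    have hw0 : 0 ≤ w := by positivity
    have hb := hu y
    have h3 : |f (x + h • y) - m| ^ 3 ≤ (h * w) ^ 3 := by gcongr
    have h4 : |f (x + h • y) - m| ≤ w := hb.trans (by nlinarith)
    have h5 : w ^ 3 ≤ 6 * Real.exp w := by
      have := Real.pow_div_factorial_le_exp w hw0 3
      norm_num [Nat.factorial] at this
      linarith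
    have h6 : |f (x + h • y) - m| ^ 3 * Real.exp |f (x + h • y) - m| ≤
        (h * w) ^ 3 * Real.exp w := by gcongr
    have h7 : (h * w) ^ 3 * Real.exp w ≤ h ^ 3 * (6 * Real.exp (2 * w)) := by
      rw [mul_pow, two_mul, Real.exp_add, mul_assoc]
      have := mul_le_mul_of_nonneg_right h5 (Real.exp_pos w).le
      have := mul_le_mul_of_nonneg_left this (pow_nonneg h0 3)
      linarith
    linarith
  have hvar : ∫ y, (f (x + h • y) - m) ^ 2 ∂μ ≤ v := by
    rw [hm, integral_sub_sq _ (f x) hint (integrable_lip_sq hf x h _)]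
    nlinarith [sq_nonneg (m - f x)]
  have i1 : Integrable (fun y => 1 + (f (x + h • y) - m)) μ :=
    (integrable_const _).add (hint.sub (integrable_const _))
  have i2 : Integrable (fun y => (f (x + h • y) - m) ^ 2 / 2) μ :=
    (integrable_lip_sq hf x h _).div_const 2
  have hI : ∫ y, Real.exp (f (x + h • y) - m) ∂μ ≤
      1 + v / 2 + h ^ 3 * ∫ y, 6 * Real.exp (2 * (L * (‖y‖ + M))) ∂μ := by
    refine (integral_mono ?_ ((i1.add i2).add (hK.const_mul _)) hpt).trans ?_
    · simp_rw [Real.exp_sub]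
      exact (integrable_lip_exp hf x h).div_const _
    · simp only [Pi.add_apply]
      rw [integral_add (by exact i1.add i2) (hK.const_mul _), integral_add i1 i2,
        integral_add (integrable_const _) (by exact hint.sub (integrable_const _)),
        integral_sub hint (integrable_const _), integral_const_mul, integral_div]
      simp [← hm]
      linarith
  have e : ∫ y, Real.exp (f (x + h • y)) ∂μ =
      Real.exp m * ∫ y, Real.exp (f (x + h • y) - m) ∂μ := by
    rw [← integral_const_mul]
    congr 1; ext y
    rw [← Real.exp_add]; ring_nf
  rw [e, Real.exp_add]
  refine mul_le_mul_of_nonneg_left (hI.trans ?_) (Real.exp_pos _).le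
  rw [add_assoc, add_comm]
  exact Real.add_one_le_exp _

lemma lipschitz_avg (hf : LipschitzWith L f) (h : ℝ) :
    LipschitzWith L (fun x => ∫ z, f (x + h • z) ∂μ) := by
  refine LipschitzWith.of_le_add_mul L fun x y => ?_
  have : ∫ z, f (x + h • z) ∂μ ≤ ∫ z, (f (y + h • z) + L * dist x y) ∂μ := by
    refine integral_mono (integrable_lip hf x h)
      ((integrable_lip hf y h).add (integrable_const _)) fun z => ?_
    simpa using hf.le_add_mul (x + h • z) (y + h • z)
  rw [integral_add (integrable_lip hf y h) (integrable_const _)] at this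
  simpa using this

/-- Averaging over a Gaussian step preserves the uniform bound on mean squared increments. -/
lemma avg_increment (hf : LipschitzWith L f) {h v : ℝ}
    (hv : ∀ x, ∫ y, (f (x + h • y) - f x) ^ 2 ∂μ ≤ v) (x : E) :
    ∫ y, ((∫ z, f (x + h • y + h • z) ∂μ) - ∫ z, f (x + h • z) ∂μ) ^ 2 ∂μ ≤ v := by
  have hc := hf.continuous
  have hbound (a y : E) : (f (a + h • y) - f a) ^ 2 ≤ (L * |h|) ^ 2 * ‖y‖ ^ 2 := by
    rw [← mul_pow, ← sq_abs (f _ - _)]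
    have := hf.abs_add_sub_le a (h • y)
    rw [norm_smul, Real.norm_eq_abs, ← mul_assoc] at this
    gcongr
  have hsq : Integrable (fun y : E => ‖y‖ ^ 2) μ :=
    (IsGaussian.memLp_two_id (μ := μ)).norm.integrable_sq
  have hprod : Integrable (Function.uncurry fun y z : E =>
      (f (x + h • z + h • y) - f (x + h • z)) ^ 2) (μ.prod μ) := by
    refine ((hsq.const_mul ((L * |h|) ^ 2)).comp_fst μ).mono' ?_ (.of_forall fun p => ?_)
    · exact Continuous.aestronglyMeasurable (by unfold Function.uncurry; fun_prop)
    · rw [Real.norm_eq_abs, Function.uncurry, abs_of_nonneg (sq_nonneg _)]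
      exact hbound _ _
  have hjensen (y : E) : ((∫ z, f (x + h • y + h • z) ∂μ) - ∫ z, f (x + h • z) ∂μ) ^ 2 ≤
      ∫ z, (f (x + h • z + h • y) - f (x + h • z)) ^ 2 ∂μ := by
    have hi1 := integrable_lip (μ := μ) hf (x + h • y) h
    have hi2 := integrable_lip (μ := μ) hf x h
    have e : (fun z => f (x + h • z + h • y) - f (x + h • z)) =
        fun z => f (x + h • y + h • z) - f (x + h • z) := by
      ext z; rw [add_right_comm]
    have hi : Integrable (fun z => f (x + h • z + h • y) - f (x + h • z)) μ := by
      rw [e]; exact hi1.sub hi2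
    have hi2' : Integrable (fun z => (f (x + h • z + h • y) - f (x + h • z) - 0) ^ 2) μ := by
      refine (integrable_const ((L * |h|) ^ 2 * ‖y‖ ^ 2)).mono' (by fun_prop)
        (.of_forall fun z => ?_)
      rw [Real.norm_eq_abs, abs_of_nonneg (sq_nonneg _), sub_zero]
      exact hbound _ _
    have := integral_sub_sq _ 0 hi hi2'
    have h0 : 0 ≤ ∫ y_1, (f (x + h • y_1 + h • y) - f (x + h • y_1) -
      ∫ z, f (x + h • z + h • y) - f (x + h • z) ∂μ) ^ 2 ∂μ :=
      integral_nonneg fun _ => sq_nonneg _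
    rw [this, e, integral_sub hi1 hi2] at h0
    simp only [sub_zero] at h0
    have e' := congrArg (fun F : E → ℝ => ∫ z, F z ^ 2 ∂μ) e
    linarith
  calc _ ≤ ∫ y, ∫ z, (f (x + h • z + h • y) - f (x + h • z)) ^ 2 ∂μ ∂μ := by
        refine integral_mono ?_ hprod.integral_prod_left hjensen
        simpa using integrable_lip_sq (μ := μ) (lipschitz_avg (μ := μ) hf h) x h
          (∫ z, f (x + h • z) ∂μ)
    _ = ∫ z, ∫ y, (f (x + h • z + h • y) - f (x + h • z)) ^ 2 ∂μ ∂μ :=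
        integral_integral_swap hprod
    _ ≤ ∫ z, v ∂μ := integral_mono hprod.integral_prod_right (integrable_const _) fun z => hv _
    _ = v := by simp

/-- Integration against the law of `c X`, split into two independent steps `a X` and `b Y`. -/
lemma integral_step (hμ : ∫ x, x ∂μ = 0) {g : E → ℝ} (hg : Continuous g) {a b c : ℝ}
    (h : a ^ 2 + b ^ 2 = c ^ 2) (hint : Integrable (fun x => g (c • x)) μ) :
    ∫ x, g (c • x) ∂μ = ∫ x, ∫ y, g (a • x + b • y) ∂μ ∂μ ∧
      Integrable (fun x => ∫ y, g (a • x + b • y) ∂μ) μ := by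
  have key := map_prod_eq_map_smul μ hμ h
  have hi : Integrable g (μ.map (fun x => c • x)) := by
    rw [integrable_map_measure hg.aestronglyMeasurable (by fun_prop)]; exact hint
  have e1 : ∫ x, g (c • x) ∂μ = ∫ x, g x ∂(μ.map (fun x => c • x)) :=
    (integral_map (by fun_prop) hg.aestronglyMeasurable).symm
  rw [← key] at hi e1
  rw [integrable_map_measure hg.aestronglyMeasurable (by fun_prop)] at hi
  rw [integral_map (by fun_prop) hg.aestronglyMeasurable] at e1
  refine ⟨?_, hi.integral_prod_left⟩
  rw [e1]
  exact integral_prod _ hi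

/-- The estimate `one_step` iterated along a walk of `k` steps of size `h`, whose endpoint has the law
of `√k h X`. The induction is over all functions of the class at once: the last step is integrated
out first, and the induction hypothesis is applied to the averaged function. -/
lemma many_steps (hμ : ∫ x, x ∂μ = 0) {h v : ℝ} (h0 : 0 ≤ h) (h1 : h ≤ 1) (k : ℕ) :
    ∀ f : E → ℝ, LipschitzWith L f → (∀ x, ∫ y, (f (x + h • y) - f x) ^ 2 ∂μ ≤ v) →
    ∫ y, Real.exp (f ((√k * h) • y)) ∂μ ≤ Real.exp (∫ y, f ((√k * h) • y) ∂μ + k * (v / 2 +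
      h ^ 3 * ∫ y, 6 * Real.exp (2 * (L * (‖y‖ + ∫ z, ‖z‖ ∂μ))) ∂μ)) := by
  set ε := v / 2 + h ^ 3 * ∫ y, 6 * Real.exp (2 * (L * (‖y‖ + ∫ z, ‖z‖ ∂μ))) ∂μ with hε
  induction k with
  | zero => intro f hf hv; simp
  | succ k ih =>
    intro f hf hv
    have hc := hf.continuous
    have hk : (√k * h) ^ 2 + h ^ 2 = (√(k + 1 : ℕ) * h) ^ 2 := by
      rw [mul_pow, mul_pow, Real.sq_sqrt (by positivity), Real.sq_sqrt (by positivity)]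
      push_cast; ring
    obtain ⟨e1, -⟩ := integral_step hμ hc hk
      (by simpa using integrable_lip (μ := μ) hf 0 (√(k + 1 : ℕ) * h))
    obtain ⟨e2, i2⟩ := integral_step hμ (g := fun x => Real.exp (f x)) (by fun_prop) hk
      (by simpa using integrable_lip_exp (μ := μ) hf 0 (√(k + 1 : ℕ) * h))
    rw [e1, e2]
    have hT := lipschitz_avg (μ := μ) hf h
    have hI := ih _ hT (avg_increment hf hv)
    calc _ ≤ ∫ x, Real.exp ((∫ y, f ((√k * h) • x + h • y) ∂μ)) * Real.exp ε ∂μ := by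
          refine integral_mono i2 ?_ fun x => ?_
          · refine Integrable.mul_const ?_ _
            simpa using integrable_lip_exp (μ := μ) hT 0 (√k * h)
          · rw [← Real.exp_add]
            exact one_step hf h0 h1 _ (hv _)
      _ ≤ _ := by
          rw [integral_mul_const]
          refine (mul_le_mul_of_nonneg_right hI (Real.exp_pos _).le).trans ?_
          rw [← Real.exp_add]
          apply le_of_eq
          push_cast
          ring_nf

/-- If the mean squared increments of `f` over a step of size `h` are `h ^ 2 * s + O(h ^ 3)`
uniformly, then `f` satisfies the exponential moment bound with variance proxy exactly `s`. -/
theorem exp_integral_bound (hμ : ∫ x, x ∂μ = 0) (hf : LipschitzWith L f) {s C : ℝ}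
    (hv : ∀ h : ℝ, 0 ≤ h → h ≤ 1 → ∀ x,
      ∫ y, (f (x + h • y) - f x) ^ 2 ∂μ ≤ h ^ 2 * s + h ^ 3 * C) :
    ∫ y, Real.exp (f y) ∂μ ≤ Real.exp (∫ y, f y ∂μ + s / 2) := by
  set K := ∫ y, 6 * Real.exp (2 * (L * (‖y‖ + ∫ z, ‖z‖ ∂μ))) ∂μ with hK
  have hN (n : ℕ) : ∫ y, Real.exp (f y) ∂μ ≤
      Real.exp (∫ y, f y ∂μ + (s / 2 + (√((n : ℝ) + 1))⁻¹ * (C / 2 + K))) := by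
    set r := √((n : ℝ) + 1) with hr
    have hr1 : 1 ≤ r := by rw [hr]; exact Real.one_le_sqrt.2 (by simp)
    have hr0 : 0 < r := by linarith
    have hh1 : r⁻¹ ≤ 1 := inv_le_one_of_one_le₀ hr1
    have := many_steps hμ (inv_nonneg.2 hr0.le) hh1 (n + 1) f hf
      (hv r⁻¹ (inv_nonneg.2 hr0.le) hh1)
    push_cast at this
    rw [← hr, mul_inv_cancel₀ hr0.ne', ← hK] at this
    simp only [one_smul] at this
    refine this.trans (le_of_eq ?_)
    have hrn : (n : ℝ) + 1 = r ^ 2 := by rw [hr, Real.sq_sqrt (by positivity)]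
    rw [hrn]
    congr 2
    field_simp
    ring
  refine ge_of_tendsto' (x := Filter.atTop) ?_ hN
  have t0 : Filter.Tendsto (fun n : ℕ => (√((n : ℝ) + 1))⁻¹) Filter.atTop (nhds 0) :=
    (Real.tendsto_sqrt_atTop.comp
      (Filter.tendsto_atTop_add_const_right _ 1 tendsto_natCast_atTop_atTop)).inv_tendsto_atTop
  have t1 := (Real.continuous_exp.tendsto _).comp
    (((t0.mul_const (C / 2 + K)).const_add (s / 2)).const_add (∫ y, f y ∂μ))
  simpa [Function.comp_def] using t1

end Abstract

/-! ### The log-sum-exp approximation of the maximum -/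

section LogSumExp

lemma exp_le_one_add_mul_exp (t : ℝ) : Real.exp t ≤ 1 + t * Real.exp t := by
  have a3 := Real.add_one_le_exp (-t)
  rw [Real.exp_neg] at a3
  have a4 := mul_le_mul_of_nonneg_right a3 (Real.exp_pos t).le
  rw [inv_mul_cancel₀ (Real.exp_pos _).ne'] at a4
  linarith

lemma LipschitzWith.const_mul_real {α : Type*} [PseudoMetricSpace α] {f : α → ℝ}
    (hf : LipschitzWith 1 f) (c : ℝ) : LipschitzWith ‖c‖₊ (fun x => c * f x) := by
  refine LipschitzWith.of_dist_le_mul fun x y => ?_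
  have := mul_le_mul_of_nonneg_left (hf.dist_le_mul x y) (abs_nonneg c)
  rwa [NNReal.coe_one, one_mul, Real.dist_eq, ← abs_mul, mul_sub, ← Real.dist_eq] at this

variable {ι : Type*} [Fintype ι]

/-- The log-sum-exp function `(1 / β) log ∑ exp (β x_z)`, a smooth approximation of the maximum
for large `β > 0`. -/
noncomputable def logSumExp (β : ℝ) (x : ι → ℝ) : ℝ := Real.log (∑ z, Real.exp (β * x z)) / β

/-- The softmax weights, i.e. the gradient of `logSumExp β` at `x`. -/
noncomputable def softmax (β : ℝ) (x : ι → ℝ) (z : ι) : ℝ :=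
  Real.exp (β * x z) / ∑ w, Real.exp (β * x w)

lemma softmax_nonneg (β : ℝ) (x : ι → ℝ) (z : ι) : 0 ≤ softmax β x z := by
  unfold softmax; positivity

variable [Nonempty ι]

lemma sum_exp_pos (β : ℝ) (x : ι → ℝ) : 0 < ∑ z, Real.exp (β * x z) :=
  Finset.sum_pos (fun _ _ => Real.exp_pos _) Finset.univ_nonempty

lemma sum_softmax (β : ℝ) (x : ι → ℝ) : ∑ z, softmax β x z = 1 := by
  simp only [softmax, ← Finset.sum_div]
  exact div_self (sum_exp_pos β x).ne'

lemma logSumExp_add_sub {β : ℝ} (x y : ι → ℝ) :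
    logSumExp β (x + y) - logSumExp β x =
      Real.log (∑ z, softmax β x z * Real.exp (β * y z)) / β := by
  have e : ∑ z, softmax β x z * Real.exp (β * y z) =
      (∑ z, Real.exp (β * (x + y) z)) / ∑ z, Real.exp (β * x z) := by
    rw [Finset.sum_div]
    refine Finset.sum_congr rfl fun z _ => ?_
    rw [softmax, Pi.add_apply, mul_add, Real.exp_add]; ring
  rw [e, Real.log_div (sum_exp_pos _ _).ne' (sum_exp_pos _ _).ne', logSumExp, logSumExp, sub_div]

lemma abs_logSumExp_add_sub_le {β : ℝ} (hβ : 0 < β) (x y : ι → ℝ) :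
    |logSumExp β (x + y) - logSumExp β x| ≤
      Real.exp (β * ‖y‖) * ∑ z, softmax β x z * |y z| := by
  have hy (z : ι) : |y z| ≤ ‖y‖ := norm_le_pi_norm y z
  have hS : 0 ≤ ∑ z, softmax β x z * |y z| :=
    Finset.sum_nonneg fun z _ => mul_nonneg (softmax_nonneg _ _ _) (abs_nonneg _)
  have hpos : 0 < ∑ z, softmax β x z * Real.exp (β * y z) := by
    refine Finset.sum_pos (fun z _ => ?_) Finset.univ_nonempty
    exact mul_pos (div_pos (Real.exp_pos _) (sum_exp_pos _ _)) (Real.exp_pos _)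
  rw [logSumExp_add_sub, abs_le, le_div_iff₀ hβ, div_le_iff₀ hβ]
  constructor
  · have hJ := convexOn_exp.map_sum_le (t := Finset.univ) (w := softmax β x)
      (p := fun z => β * y z) (fun z _ => softmax_nonneg _ _ _) (sum_softmax β x) (by simp)
    simp only [smul_eq_mul] at hJ
    have h1 := (Real.le_log_iff_exp_le hpos).2 hJ
    have h2 : -(β * ∑ z, softmax β x z * |y z|) ≤ ∑ z, softmax β x z * (β * y z) := by
      rw [Finset.mul_sum, ← Finset.sum_neg_distrib]
      refine Finset.sum_le_sum fun z _ => ?_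
      nlinarith [mul_nonneg (mul_nonneg hβ.le (softmax_nonneg β x z))
        (by linarith [neg_abs_le (y z)] : 0 ≤ y z + |y z|)]
    have h3 : 1 ≤ Real.exp (β * ‖y‖) := Real.one_le_exp (by positivity)
    have h4 := mul_nonneg (mul_nonneg (sub_nonneg.2 h3) hS) hβ.le
    nlinarith
  · have h1 := Real.log_le_sub_one_of_pos hpos
    have h2 : ∑ z, softmax β x z * Real.exp (β * y z) - 1 =
        ∑ z, softmax β x z * (Real.exp (β * y z) - 1) := by
      simp only [mul_sub, mul_one, Finset.sum_sub_distrib, sum_softmax]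
    refine (h1.trans (le_of_eq h2)).trans ?_
    rw [Finset.mul_sum, Finset.sum_mul]
    refine Finset.sum_le_sum fun z _ => ?_
    have h3 : Real.exp (β * y z) - 1 ≤ β * |y z| * Real.exp (β * ‖y‖) := by
      have a1 : Real.exp (β * y z) ≤ Real.exp (β * |y z|) := by
        gcongr; exact le_abs_self _
      have a2 : Real.exp (β * |y z|) ≤ Real.exp (β * ‖y‖) := by
        gcongr; exact hy z
      have a4 := exp_le_one_add_mul_exp (β * |y z|)
      have a5 := mul_le_mul_of_nonneg_left a2 (by positivity : 0 ≤ β * |y z|)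
      linarith
    have := mul_le_mul_of_nonneg_left h3 (softmax_nonneg β x z)
    linarith

/-- Squared increments of log-sum-exp: to leading order in `h` they are dominated by a convex
combination of the squared coordinate increments. -/
lemma sq_logSumExp_add_sub_le {β : ℝ} (hβ : 0 < β) (x y : ι → ℝ) {h : ℝ} (h0 : 0 ≤ h)
    (h1 : h ≤ 1) :
    (logSumExp β (x + h • y) - logSumExp β x) ^ 2 ≤
      h ^ 2 * ∑ z, softmax β x z * y z ^ 2 +
        h ^ 3 * (2 * β * ‖y‖ ^ 3 * Real.exp (2 * β * ‖y‖)) := by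
  have hp (z : ι) := softmax_nonneg β x z
  have hb := abs_logSumExp_add_sub_le hβ x (h • y)
  have e1 : ∑ z, softmax β x z * |(h • y) z| = h * ∑ z, softmax β x z * |y z| := by
    rw [Finset.mul_sum]
    refine Finset.sum_congr rfl fun z _ => ?_
    rw [Pi.smul_apply, smul_eq_mul, abs_mul, abs_of_nonneg h0]; ring
  rw [e1, norm_smul, Real.norm_eq_abs, abs_of_nonneg h0] at hb
  set A := ∑ z, softmax β x z * |y z| with hA
  set V := ∑ z, softmax β x z * y z ^ 2 with hV
  have hAV : A ^ 2 ≤ V := by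
    have hJ := (Even.convexOn_pow (𝕜 := ℝ) (n := 2) even_two).map_sum_le (t := Finset.univ)
      (w := softmax β x) (p := fun z => |y z|) (fun z _ => hp z) (sum_softmax β x) (by simp)
    simpa [smul_eq_mul, sq_abs] using hJ
  have hVn : V ≤ ‖y‖ ^ 2 := by
    calc V ≤ ∑ z, softmax β x z * ‖y‖ ^ 2 := by
          refine Finset.sum_le_sum fun z _ => mul_le_mul_of_nonneg_left ?_ (hp z)
          rw [← sq_abs]
          have : |y z| ≤ ‖y‖ := norm_le_pi_norm y z
          gcongr
      _ = ‖y‖ ^ 2 := by rw [← Finset.sum_mul, sum_softmax, one_mul]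
  have hV0 : 0 ≤ V := (sq_nonneg A).trans hAV
  have hA0 : 0 ≤ A := Finset.sum_nonneg fun z _ => mul_nonneg (hp z) (abs_nonneg _)
  have hsq : (logSumExp β (x + h • y) - logSumExp β x) ^ 2 ≤
      Real.exp (h * (2 * β * ‖y‖)) * (h ^ 2 * V) := by
    rw [← sq_abs]
    calc _ ≤ (Real.exp (β * (h * ‖y‖)) * (h * A)) ^ 2 := by gcongr
      _ = Real.exp (h * (2 * β * ‖y‖)) * (h ^ 2 * A ^ 2) := by
        rw [mul_pow, ← Real.exp_nat_mul]; push_cast; ring_nf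
      _ ≤ _ := by gcongr
  refine hsq.trans ?_
  set t := 2 * β * ‖y‖ with ht
  have ht0 : 0 ≤ t := by positivity
  have hexp : Real.exp (h * t) ≤ 1 + h * t * Real.exp t := by
    have a2 : Real.exp (h * t) ≤ Real.exp t := by gcongr; nlinarith
    have a4 := exp_le_one_add_mul_exp (h * t)
    have a5 := mul_le_mul_of_nonneg_left a2 (by positivity : 0 ≤ h * t)
    linarith
  calc _ ≤ (1 + h * t * Real.exp t) * (h ^ 2 * V) := by gcongr
    _ = h ^ 2 * V + h ^ 3 * (t * Real.exp t) * V := by ring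
    _ ≤ h ^ 2 * V + h ^ 3 * (t * Real.exp t) * ‖y‖ ^ 2 := by gcongr
    _ = _ := by rw [ht]; ring

lemma lipschitzWith_logSumExp {β : ℝ} (hβ : 0 < β) :
    LipschitzWith 1 (logSumExp β : (ι → ℝ) → ℝ) := by
  refine LipschitzWith.of_le_add fun x y => ?_
  have h : ∑ z, Real.exp (β * x z) ≤ Real.exp (β * dist x y) * ∑ z, Real.exp (β * y z) := by
    rw [Finset.mul_sum]
    refine Finset.sum_le_sum fun z _ => ?_
    rw [← Real.exp_add, ← mul_add]
    have := (le_abs_self _).trans (dist_le_pi_dist x y z)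
    gcongr
    linarith
  have h2 := Real.log_le_log (sum_exp_pos β x) h
  rw [Real.log_mul (Real.exp_pos _).ne' (sum_exp_pos _ _).ne', Real.log_exp] at h2
  rw [logSumExp, logSumExp, div_le_iff₀ hβ, add_mul, div_mul_cancel₀ _ hβ.ne']
  linarith

lemma sup_le_logSumExp {β : ℝ} (hβ : 0 < β) (x : ι → ℝ) :
    Finset.univ.sup' Finset.univ_nonempty x ≤ logSumExp β x := by
  refine Finset.sup'_le _ _ fun z _ => ?_
  rw [logSumExp, le_div_iff₀ hβ, Real.le_log_iff_exp_le (sum_exp_pos _ _), mul_comm]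
  exact Finset.single_le_sum (f := fun z => Real.exp (β * x z)) (fun _ _ => (Real.exp_pos _).le)
    (Finset.mem_univ z)

lemma logSumExp_le_sup {β : ℝ} (hβ : 0 < β) (x : ι → ℝ) :
    logSumExp β x ≤ Finset.univ.sup' Finset.univ_nonempty x + Real.log (Fintype.card ι) / β := by
  rw [logSumExp, div_le_iff₀ hβ, add_mul, div_mul_cancel₀ _ hβ.ne',
    Real.log_le_iff_le_exp (sum_exp_pos _ _), Real.exp_add, Real.exp_log (by positivity)]
  have : ∀ z ∈ Finset.univ, Real.exp (β * x z) ≤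
      Real.exp (Finset.univ.sup' Finset.univ_nonempty x * β) := fun z hz => by
    rw [mul_comm]
    gcongr
    exact Finset.le_sup' x hz
  refine (Finset.sum_le_card_nsmul _ _ _ this).trans (le_of_eq ?_)
  rw [nsmul_eq_mul, Finset.card_univ, mul_comm]

variable {μ : Measure (ι → ℝ)} [IsGaussian μ]

lemma mgf_logSumExp (hμ : ∫ x, x ∂μ = 0) {s : ℝ} (hs : ∀ z, ∫ x, x z ^ 2 ∂μ ≤ s)
    (m : ι → ℝ) {β : ℝ} (hβ : 0 < β) (lam : ℝ) :
    ∫ x, Real.exp (lam * logSumExp β (m + x)) ∂μ ≤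
      Real.exp (lam * (∫ x, logSumExp β (m + x) ∂μ) + lam ^ 2 * s / 2) := by
  have hlip : LipschitzWith ‖lam‖₊ (fun x => lam * logSumExp β (m + x)) := by
    have h1 : LipschitzWith 1 (fun x => logSumExp β (m + x)) := by
      refine LipschitzWith.of_dist_le_mul fun x y => ?_
      simpa using (lipschitzWith_logSumExp hβ).dist_le_mul (m + x) (m + y)
    exact h1.const_mul_real lam
  rw [← integral_const_mul]
  have hco (z : ι) : Integrable (fun y : ι → ℝ => y z ^ 2) μ :=
    (IsGaussian.memLp_dual μ (ContinuousLinearMap.proj z) 2 (by simp)).integrable_sq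
  have hrem : Integrable (fun y : ι → ℝ => 2 * β * ‖y‖ ^ 3 * Real.exp (2 * β * ‖y‖)) μ := by
    refine integrable_of_le_exp_norm μ (by fun_prop) (2 * β * 6) (1 + 2 * β) fun y => ?_
    rw [abs_of_nonneg (by positivity), add_mul, Real.exp_add, one_mul]
    have := Real.pow_div_factorial_le_exp ‖y‖ (norm_nonneg _) 3
    norm_num [Nat.factorial] at this
    have h6 : ‖y‖ ^ 3 ≤ 6 * Real.exp ‖y‖ := by linarith
    calc _ ≤ 2 * β * (6 * Real.exp ‖y‖) * Real.exp (2 * β * ‖y‖) := by gcongr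
      _ = _ := by ring
  refine exp_integral_bound hμ hlip
    (C := lam ^ 2 * ∫ y : ι → ℝ, 2 * β * ‖y‖ ^ 3 * Real.exp (2 * β * ‖y‖) ∂μ)
    fun h h0 h1 x => ?_
  have hV : Integrable (fun y : ι → ℝ => ∑ z, softmax β (m + x) z * y z ^ 2) μ :=
    integrable_finsetSum _ fun z _ => (hco z).const_mul _
  have hpt (y : ι → ℝ) : (lam * logSumExp β (m + (x + h • y)) - lam * logSumExp β (m + x)) ^ 2 ≤
      lam ^ 2 * (h ^ 2 * ∑ z, softmax β (m + x) z * y z ^ 2 +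
        h ^ 3 * (2 * β * ‖y‖ ^ 3 * Real.exp (2 * β * ‖y‖))) := by
    rw [← mul_sub, mul_pow, ← add_assoc]
    exact mul_le_mul_of_nonneg_left (sq_logSumExp_add_sub_le hβ _ y h0 h1) (sq_nonneg _)
  refine (integral_mono (integrable_lip_sq hlip x h _)
    (((hV.const_mul _).add (hrem.const_mul _)).const_mul _) hpt).trans ?_
  simp only [Pi.add_apply]
  rw [integral_const_mul, integral_add (hV.const_mul _) (hrem.const_mul _), integral_const_mul,
    integral_const_mul, integral_finsetSum _ fun z _ => (hco z).const_mul _]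
  have hsum : ∑ z, ∫ y : ι → ℝ, softmax β (m + x) z * y z ^ 2 ∂μ ≤ s := by
    calc _ ≤ ∑ z, softmax β (m + x) z * s := by
          refine Finset.sum_le_sum fun z _ => ?_
          rw [integral_const_mul]
          exact mul_le_mul_of_nonneg_left (hs z) (softmax_nonneg _ _ _)
      _ = s := by rw [← Finset.sum_mul, sum_softmax, one_mul]
  have := mul_le_mul_of_nonneg_left hsum (by positivity : 0 ≤ lam ^ 2 * h ^ 2)
  linarith

lemma lipschitzWith_sup : LipschitzWith 1
    (fun x : ι → ℝ => Finset.univ.sup' Finset.univ_nonempty x) := by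
  refine LipschitzWith.of_le_add fun x y => Finset.sup'_le _ _ fun z hz => ?_
  have := (le_abs_self _).trans (dist_le_pi_dist x y z)
  linarith [Finset.le_sup' y hz]

/-- The maximum of a centered Gaussian vector shifted by `m` is sub-Gaussian with variance proxy any
bound `s` on the coordinate variances; `lam` may have either sign. -/
lemma mgf_sup (hμ : ∫ x, x ∂μ = 0) {s : ℝ} (hs : ∀ z, ∫ x, x z ^ 2 ∂μ ≤ s)
    (m : ι → ℝ) (lam : ℝ) :
    Integrable (fun x => Real.exp (lam * (Finset.univ.sup' Finset.univ_nonempty (m + x) -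
      ∫ y, Finset.univ.sup' Finset.univ_nonempty (m + y) ∂μ))) μ ∧
    ∫ x, Real.exp (lam * (Finset.univ.sup' Finset.univ_nonempty (m + x) -
      ∫ y, Finset.univ.sup' Finset.univ_nonempty (m + y) ∂μ)) ∂μ ≤
      Real.exp (lam ^ 2 * s / 2) := by
  set F : (ι → ℝ) → ℝ := fun x => Finset.univ.sup' Finset.univ_nonempty x with hF
  set E0 := ∫ y, F (m + y) ∂μ with hE0
  have hFi : Integrable (fun y => F (m + y)) μ := by
    have := integrable_lip (μ := μ) lipschitzWith_sup m 1
    simp only [one_smul] at this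
    exact this
  have hFe : Integrable (fun y => Real.exp (lam * F (m + y))) μ := by
    have hl : LipschitzWith ‖lam‖₊ (fun x => lam * F x) := by
      exact lipschitzWith_sup.const_mul_real lam
    simpa using integrable_lip_exp (μ := μ) hl m 1
  have hint : Integrable (fun x => Real.exp (lam * (F (m + x) - E0))) μ := by
    simp_rw [mul_sub, Real.exp_sub]
    exact hFe.div_const _
  refine ⟨hint, ?_⟩
  have hβ (n : ℕ) : ∫ x, Real.exp (lam * (F (m + x) - E0)) ∂μ ≤
      Real.exp (lam ^ 2 * s / 2 + 2 * |lam| * (Real.log (Fintype.card ι) / ((n : ℝ) + 1))) := by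
    set β : ℝ := (n : ℝ) + 1 with hβd
    have hβ : 0 < β := by positivity
    set δ := Real.log (Fintype.card ι) / β with hδ
    have hGi : Integrable (fun y => logSumExp β (m + y)) μ := by
      simpa using integrable_lip (μ := μ) (lipschitzWith_logSumExp hβ) m 1
    have hGe : Integrable (fun y => Real.exp (lam * logSumExp β (m + y))) μ := by
      have hl : LipschitzWith ‖lam‖₊ (fun x : ι → ℝ => lam * logSumExp β x) := by
        exact (lipschitzWith_logSumExp hβ).const_mul_real lam
      simpa using integrable_lip_exp (μ := μ) hl m 1
    set E1 := ∫ y, logSumExp β (m + y) ∂μ with hE1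
    have hlo : E0 ≤ E1 := integral_mono hFi hGi fun y => sup_le_logSumExp hβ _
    have hup : E1 ≤ E0 + δ := by
      have := integral_mono hGi (hFi.add (integrable_const δ)) fun y => logSumExp_le_sup hβ (m + y)
      simp only [Pi.add_apply] at this
      rw [integral_add hFi (integrable_const _)] at this
      simpa using this
    have hpt (x : ι → ℝ) : Real.exp (lam * (F (m + x) - E0)) ≤
        Real.exp (2 * |lam| * δ - lam * E1) * Real.exp (lam * logSumExp β (m + x)) := by
      rw [← Real.exp_add]
      apply Real.exp_le_exp.2
      have h1 := sup_le_logSumExp hβ (m + x)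
      have h2 := logSumExp_le_sup hβ (m + x)
      have h3 : |(F (m + x) - E0) - (logSumExp β (m + x) - E1)| ≤ 2 * δ := by
        rw [abs_le]
        constructor <;> simp only [hF] <;> linarith
      have h4 := (le_abs_self _).trans
        ((abs_mul lam ((F (m + x) - E0) - (logSumExp β (m + x) - E1))).le.trans
          (mul_le_mul_of_nonneg_left h3 (abs_nonneg lam)))
      linarith
    refine (integral_mono hint (hGe.const_mul _) hpt).trans ?_
    rw [integral_const_mul]
    refine (mul_le_mul_of_nonneg_left (mgf_logSumExp hμ hs m hβ lam) (Real.exp_pos _).le).trans ?_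
    rw [← Real.exp_add]
    apply le_of_eq
    rw [← hE1]
    ring_nf
  refine ge_of_tendsto' (x := Filter.atTop) ?_ hβ
  have t0 : Filter.Tendsto (fun n : ℕ => Real.log (Fintype.card ι) / ((n : ℝ) + 1)) Filter.atTop
      (nhds 0) := Filter.Tendsto.const_div_atTop
      (Filter.tendsto_atTop_add_const_right _ 1 tendsto_natCast_atTop_atTop) _
  have t1 := (Real.continuous_exp.tendsto _).comp
    ((t0.const_mul (2 * |lam|)).const_add (lam ^ 2 * s / 2))
  simpa [Function.comp_def] using t1

end LogSumExp

/-! ### Concentration of the maximum -/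

theorem stmt7 (ι : Type) (B : Finset ι) (hB : B.Nonempty)
    (Ω : Type) (mΩ : MeasurableSpace Ω) (P : Measure Ω) (hP : IsProbabilityMeasure P)
    (η : ι → Ω → ℝ)
    (hgauss : ∀ (n : ℕ) (c : Fin n → ℝ) (z : Fin n → ι), (∀ i, z i ∈ B) →
      ∃ (m : ℝ) (v : NNReal),
        Measure.map (fun ω => ∑ i, c i * η (z i) ω) P = gaussianReal m v)
    (hσ : 0 < B.sup' hB fun z => variance (η z) P) :
    (∀ lam : ℝ, 0 < lam →
      (∫ ω, Real.exp (lam * ((B.sup' hB fun z => η z ω) -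
          ∫ ω', B.sup' hB fun z => η z ω' ∂P)) ∂P)
        ≤ Real.exp (lam ^ 2 * (B.sup' hB fun z => variance (η z) P) / 2)) ∧
    (∀ a : ℝ, 0 < a →
      P {ω | a ≤ |(B.sup' hB fun z => η z ω) - ∫ ω', B.sup' hB fun z => η z ω' ∂P|}
        ≤ ENNReal.ofReal
            (2 * Real.exp (-a ^ 2 / (2 * B.sup' hB fun z => variance (η z) P)))) := by
  set s := B.sup' hB fun z => variance (η z) P with hs
  classical
  have : Nonempty B := hB.coe_sort
  have hmeas (z : B) : AEMeasurable (η z) P := by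
    obtain ⟨m, v, h⟩ := hgauss 1 (fun _ => 1) (fun _ => z) (fun _ => z.2)
    simp only [Finset.univ_unique, Finset.sum_singleton, one_mul] at h
    -- a non-measurable map would push `P` forward to the zero measure
    refine AEMeasurable.of_map_ne_zero ?_
    change Measure.map (fun ω => η z ω) P ≠ 0
    rw [h]
    exact IsProbabilityMeasure.ne_zero _
  let X : Ω → (B → ℝ) := fun ω z => η z ω
  have hX : AEMeasurable X P := aemeasurable_pi_lambda _ hmeas
  have hG : IsGaussian (P.map X) := by
    refine isGaussian_of_map_eq_gaussianReal fun L => ?_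
    let e := Fintype.equivFin B
    obtain ⟨m, v, h⟩ := hgauss (Fintype.card B) (fun i => L (Pi.single (e.symm i) 1))
      (fun i => (e.symm i : ι)) (fun i => (e.symm i).2)
    refine ⟨m, v, ?_⟩
    rw [AEMeasurable.map_map_of_aemeasurable (by fun_prop) hX, ← h]
    congr 1
    ext ω
    rw [Function.comp_apply, e.symm.sum_comp (fun z : B => L (Pi.single z 1) * η z ω)]
    conv_lhs => rw [pi_eq_sum_univ' (X ω), map_sum]
    refine Finset.sum_congr rfl fun z _ => ?_
    rw [map_smul, smul_eq_mul, mul_comm]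
  let m : B → ℝ := ∫ x, x ∂(P.map X)
  let μ : Measure (B → ℝ) := (P.map X).map (fun x => x - m)
  have hμG : IsGaussian μ := inferInstance
  have hXi : Integrable (fun x : B → ℝ => x) (P.map X) := IsGaussian.integrable_id
  have hμ0 : ∫ x, x ∂μ = 0 := by
    rw [integral_map (by fun_prop) (by fun_prop), integral_sub hXi (integrable_const _)]
    simp [m]
  have hμP : μ = P.map (fun ω => X ω - m) :=
    AEMeasurable.map_map_of_aemeasurable (by fun_prop) hX
  have hXm : AEMeasurable (fun ω => X ω - m) P := hX.sub_const m
  have hvar (z : B) : ∫ x, x z ^ 2 ∂μ ≤ s := by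
    have hmz : m z = ∫ ω, η z ω ∂P := by
      have h1 : m z = ∫ x, x z ∂(P.map X) :=
        ((ContinuousLinearMap.proj (R := ℝ) (φ := fun _ : B => ℝ) z).integral_comp_comm hXi).symm
      rw [h1, integral_map hX (measurable_pi_apply z).aestronglyMeasurable]
    rw [hμP, integral_map hXm ((measurable_pi_apply z).pow_const 2).aestronglyMeasurable]
    refine le_trans (le_of_eq ?_) (Finset.le_sup' (fun z => variance (η z) P) z.2)
    rw [variance_eq_integral (hmeas z)]
    simp [X, hmz]
  let F : (B → ℝ) → ℝ := fun x => Finset.univ.sup' Finset.univ_nonempty x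
  have hFc : Continuous F := lipschitzWith_sup.continuous
  have hsup (ω : Ω) : (B.sup' hB fun z => η z ω) = F (m + (X ω - m)) := by
    rw [add_sub_cancel]
    apply le_antisymm
    · exact Finset.sup'_le _ _ fun z hz => Finset.le_sup' (X ω) (Finset.mem_univ (⟨z, hz⟩ : B))
    · exact Finset.sup'_le _ _ fun z _ => Finset.le_sup' (fun z => η z ω) z.2
  simp_rw [hsup]
  have hE : ∫ ω, F (m + (X ω - m)) ∂P = ∫ y, F (m + y) ∂μ := by
    rw [hμP, integral_map hXm (Continuous.aestronglyMeasurable (by fun_prop))]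
  rw [hE]
  have hsub : HasSubgaussianMGF (fun x => F (m + x) - ∫ y, F (m + y) ∂μ) (NNReal.mk s hσ.le) μ := by
    refine ⟨fun t => (mgf_sup hμ0 hvar m t).1, fun t => (mgf_sup hμ0 hvar m t).2.trans_eq ?_⟩
    rw [NNReal.coe_mk, mul_comm]
  rw [hμP] at hsub
  have hsubP := HasSubgaussianMGF.of_map hXm hsub
  rw [← hμP] at hsubP
  refine ⟨fun lam _ => ?_, fun a ha => ?_⟩
  · have := hsubP.mgf_le lam
    rw [NNReal.coe_mk, mul_comm s] at this
    exact this
  · have h1 := hsubP.measure_ge_le ha.le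
    have h2 := hsubP.neg.measure_ge_le ha.le
    rw [NNReal.coe_mk] at h1 h2
    rw [← ofReal_measureReal]
    apply ENNReal.ofReal_le_ofReal
    rw [two_mul]
    refine le_trans ?_ (add_le_add h1 h2)
    refine (measureReal_mono ?_).trans (measureReal_union_le _ _)
    intro ω hω
    rcases le_abs.1 (show a ≤ |_| from hω) with h | h
    · exact Or.inl h
    · exact Or.inr h
end

section
/- For every positive integer k and every d ∈ (0,2], one has ∑_{j=0}^{r₀(d)} (2θ_{j,d} + sin(2θ_{j,d})) ≤ 12; in particular (1/π) ∑_{j=0}^{r₀(d)} (2θ_{j,d} + sin(2θ_{j,d})) ≤ 4. -/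
/-!
Each summand is at most `6 x` with `x = sin θ`: Jordan's inequality gives `2 θ ≤ π x ≤ 4 x`, and
`sin (2 θ) = 2 sin θ cos θ ≤ 2 x`. The values `x_j = 2 ^ (k j) d / 2` grow geometrically with
ratio `2 ^ k ≥ 2` and the last one is at most `1`, so their sum is at most `2`. This gives the
bound `12`; the second bound follows from `π > 3`.
-/

lemma two_arcsin_add_sin_le {x : ℝ} (h0 : 0 ≤ x) (h1 : x ≤ 1) :
    2 * Real.arcsin x + Real.sin (2 * Real.arcsin x) ≤ 6 * x := by
  have hx : Real.sin (Real.arcsin x) = x := Real.sin_arcsin (by linarith) h1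
  have ha : 0 ≤ Real.arcsin x := Real.arcsin_nonneg.2 h0
  have hj := Real.mul_le_sin ha (Real.arcsin_le_pi_div_two x)
  rw [hx, div_mul_eq_mul_div, div_le_iff₀ Real.pi_pos] at hj
  rw [Real.sin_two_mul, hx]
  nlinarith [Real.cos_le_one (Real.arcsin x), Real.pi_le_four]

lemma sum_two_pow_mul_le {k : ℕ} (hk : 0 < k) (n : ℕ) :
    ∑ j ∈ Finset.range (n + 1), (2:ℝ) ^ (k * j) ≤ 2 * 2 ^ (k * n) := by
  induction n with
  | zero => simp
  | succ n ih =>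
    have h2 : (2:ℝ) ≤ 2 ^ k := le_self_pow₀ (by norm_num) hk.ne'
    have hp : (0:ℝ) < 2 ^ (k * n) := by positivity
    rw [Finset.sum_range_succ, mul_add, mul_one, pow_add]
    nlinarith

theorem stmt11 (k : ℕ) (hk : 0 < k) (d : ℝ) (hd : d ∈ Set.Ioc (0:ℝ) 2) (r0 : ℕ)
    (hr0l : (2:ℝ) ^ (-(k * (r0 + 1) : ℤ)) < d / 2)
    (hr0u : d / 2 ≤ (2:ℝ) ^ (-(k * r0 : ℤ))) :
    (∑ j ∈ Finset.range (r0 + 1),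
        (2 * Real.arcsin ((2:ℝ) ^ (k * j) * d / 2)
          + Real.sin (2 * Real.arcsin ((2:ℝ) ^ (k * j) * d / 2)))) ≤ 12 ∧
    (1 / Real.pi) * (∑ j ∈ Finset.range (r0 + 1),
        (2 * Real.arcsin ((2:ℝ) ^ (k * j) * d / 2)
          + Real.sin (2 * Real.arcsin ((2:ℝ) ^ (k * j) * d / 2)))) ≤ 4 := by
  have hd0 : 0 < d := hd.1
  have hlast : (2:ℝ) ^ (k * r0) * (d / 2) ≤ 1 := by
    have hp : (0:ℝ) < 2 ^ (k * r0) := by positivity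
    have hu : d / 2 ≤ ((2:ℝ) ^ (k * r0))⁻¹ := by
      rw [zpow_neg] at hr0u
      exact_mod_cast hr0u
    calc (2:ℝ) ^ (k * r0) * (d / 2) ≤ 2 ^ (k * r0) * (2 ^ (k * r0))⁻¹ := by gcongr
      _ = 1 := mul_inv_cancel₀ hp.ne'
  have main : (∑ j ∈ Finset.range (r0 + 1),
        (2 * Real.arcsin ((2:ℝ) ^ (k * j) * d / 2)
          + Real.sin (2 * Real.arcsin ((2:ℝ) ^ (k * j) * d / 2)))) ≤ 12 := by
    calc _ ≤ ∑ j ∈ Finset.range (r0 + 1), 6 * ((2:ℝ) ^ (k * j) * d / 2) := by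
          refine Finset.sum_le_sum fun j hj => two_arcsin_add_sin_le (by positivity) ?_
          have hjr : j ≤ r0 := Nat.lt_succ_iff.1 (Finset.mem_range.1 hj)
          have hle : (2:ℝ) ^ (k * j) ≤ 2 ^ (k * r0) :=
            pow_le_pow_right₀ (by norm_num) (Nat.mul_le_mul_left k hjr)
          nlinarith
      _ = (∑ j ∈ Finset.range (r0 + 1), (2:ℝ) ^ (k * j)) * (3 * d) := by
          rw [Finset.sum_mul]
          exact Finset.sum_congr rfl fun j _ => by ring
      _ ≤ (2 * 2 ^ (k * r0)) * (3 * d) := by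
          gcongr
          exact sum_two_pow_mul_le hk r0
      _ ≤ 12 := by linarith
  refine ⟨main, ?_⟩
  rw [one_div, inv_mul_le_iff₀ Real.pi_pos]
  linarith [Real.pi_gt_three]
end
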